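/- Let R be a commutative ring and let η, ρ ∈ R satisfy η * (2 + η * ρ) = 0. Let M be an R-module such that (i) every element of M is annihilated by some power of ρ (for each x ∈ M there is n with ρ^n • x = 0), and (ii) multiplication by η is surjective on M (for each x ∈ M there is y ∈ M with x = η • y). Then every element of M is annihilated by a power of 2: for each x ∈ M there exists n with 2^n • x = 0. In fact, if ρ^n • x = 0 and x = η^n • y for some y, then 2^n • x = 0. -/

import Mathlib

/-- Let `R` be a commutative ring with elements `η`, `ρ` satisfying the Milnor–Witt
relation `η * (2 + η * ρ) = 0`, and let `M` be an `R`-module in which every element is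
annihilated by a power of `ρ` and on which multiplication by `η` is surjective.  Then
every element of `M` is annihilated by a power of `2`; in fact if `ρ^n • x = 0` and
`x = η^n • y` then `2^n • x = 0`. -/
theorem two_pow_torsion_of_rho_torsion_eta_divisible
    (R : Type*) [CommRing R] (η ρ : R) (h : η * (2 + η * ρ) = 0)
    (M : Type*) [AddCommGroup M] [Module R M]
    (h1 : ∀ x : M, ∃ n : ℕ, ρ ^ n • x = 0)
    (h2 : ∀ x : M, ∃ y : M, x = η • y) :
    (∀ x : M, ∃ n : ℕ, (2 : R) ^ n • x = 0) ∧
    (∀ (x y : M) (n : ℕ), ρ ^ n • x = 0 → x = η ^ n • y → (2 : R) ^ n • x = 0) := by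
  have key : ∀ (x y : M) (n : ℕ), ρ ^ n • x = 0 → x = η ^ n • y → (2 : R) ^ n • x = 0 := by
    intro x y n hx hy
    have e : (2 : R) * η = -η * ρ * η := by linear_combination h
    have e2 : (2 : R) ^ n * η ^ n = (-η) ^ n * ρ ^ n * η ^ n := by
      rw [← mul_pow, e, mul_pow, mul_pow]
    have e3 : (2 : R) ^ n • x = (-η) ^ n • ρ ^ n • x := by
      rw [hy, smul_smul, e2, mul_smul, mul_smul]
    rw [e3, hx, smul_zero]
  refine ⟨fun x => ?_, key⟩
  obtain ⟨n, hn⟩ := h1 x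
  have div : ∀ k : ℕ, ∃ y : M, x = η ^ k • y := by
    intro k
    induction k with
    | zero => exact ⟨x, by simp⟩
    | succ k ih =>
      obtain ⟨y, hy⟩ := ih
      obtain ⟨z, hz⟩ := h2 y
      exact ⟨z, by rw [pow_succ, mul_smul, ← hz, ← hy]⟩
  obtain ⟨y, hy⟩ := div n
  exact ⟨n, key x y n hn hy⟩
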